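/- arXiv:hep-th/9407124 — 2 statements merged into one kernel-verified Lean document; each statement's English description precedes it below -/
import Mathlib

section
/- In Sym, for every composition I: Λ^I = Σ_{J ⪰ I} (−1)^{|I|−ℓ(J)} S^J and S^I = Σ_{J ⪰ I} (−1)^{|I|−ℓ(J)} Λ^J. In particular the transition matrices between the bases (S^I) and (Λ^I) of each homogeneous component of Sym coincide. -/
open Finset

namespace NCSF

noncomputable section

/-- `Sym = ℚ⟨S₁,S₂,S₃,…⟩`, the free associative algebra over `ℚ` on countably many
noncommuting generators, the generator of index `n : ℕ` representing `S (n+1)`. -/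
abbrev Sym : Type := FreeAlgebra ℚ ℕ

/-- The complete homogeneous noncommutative symmetric functions: `S 0 = 1` and
`S (n+1)` is the `n`-th generator of the free algebra. -/
def S : ℕ → Sym
  | 0 => 1
  | n + 1 => FreeAlgebra.ι ℚ n

/-- `S^I = S_{i₁} ⋯ S_{i_r}` for a list `I = [i₁, …, i_r]`. -/
def SProd (L : List ℕ) : Sym := (L.map S).prod

/-- The set of partial sums `i₁ + ⋯ + i_k` (`1 ≤ k ≤ length`) of a list. -/
def psums (L : List ℕ) : Finset ℕ :=
  (Finset.range L.length).image fun k => (L.take (k + 1)).sum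

/-- The noncommutative ribbon Schur function
`R_I = ∑_{J ⪯ I} (−1)^{ℓ(I)−ℓ(J)} S^J`, the sum being over the compositions `J`
of `|I|` that are coarser than `I` (every partial sum of `J` is a partial sum of `I`). -/
def Ribbon (L : List ℕ) : Sym :=
  ∑ J : Composition L.sum,
    if psums J.blocks ⊆ psums L then ((-1 : ℚ) ^ (L.length - J.length)) • SProd J.blocks
    else 0


/-- The noncommutative elementary symmetric functions
`Λ_n = ∑_{|J|=n} (−1)^{n−ℓ(J)} S^J`. -/
def Lam (n : ℕ) : Sym :=
  ∑ J : Composition n, ((-1 : ℚ) ^ (n - J.length)) • SProd J.blocks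

/-- `Λ^I = Λ_{i₁} ⋯ Λ_{i_r}`. -/
def LamProd (L : List ℕ) : Sym := (L.map Lam).prod

/-! The expansion of `Λ^I` holds because refining `I` amounts to choosing a composition of each of
its parts, while the sign and the monomial are both multiplicative under concatenation. Refinement
of compositions of `n` is inclusion of boundary sets, so its intervals are Boolean lattices and, by
Möbius inversion, the signed sum over refinements is its own inverse; this turns the expansion of
`Λ^I` into the expansion of `S^I`. -/

section PartialSums

theorem psums_nil : psums [] = ∅ := rfl

theorem psums_cons (a : ℕ) (L : List ℕ) :
    psums (a :: L) = insert a ((psums L).image (a + ·)) := by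
  rw [psums, List.length_cons, range_add_one', map_eq_image, image_insert, image_image, psums,
    image_image]
  rfl

theorem psums_append (A B : List ℕ) :
    psums (A ++ B) = psums A ∪ (psums B).image (A.sum + ·) := by
  induction A with
  | nil => simp [psums_nil]
  | cons a A ih =>
    simp [psums_cons, ih, image_union, image_image, Function.comp_def, add_assoc]

theorem le_sum_of_mem_psums {L : List ℕ} {x : ℕ} (hx : x ∈ psums L) : x ≤ L.sum := by
  obtain ⟨k, -, rfl⟩ := mem_image.1 hx
  exact (List.take_sublist _ _).sum_le_sum fun _ _ => Nat.zero_le _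

theorem pos_of_mem_psums {L : List ℕ} (hL : ∀ i ∈ L, 0 < i) {x : ℕ} (hx : x ∈ psums L) :
    0 < x := by
  cases L with
  | nil => simp [psums_nil] at hx
  | cons a L =>
    have ha : 0 < a := hL a List.mem_cons_self
    rw [psums_cons, mem_insert, mem_image] at hx
    omega

theorem sum_mem_psums {L : List ℕ} (hL : L ≠ []) : L.sum ∈ psums L := by
  have hpos : 0 < L.length := List.length_pos_iff.2 hL
  exact mem_image.2 ⟨L.length - 1, mem_range.2 (Nat.sub_one_lt_of_lt hpos),
    by rw [Nat.sub_add_cancel hpos, List.take_length]⟩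

theorem psums_sum_cons_subset_psums_append_iff {A B I : List ℕ} (hA : A ≠ [])
    (hI : ∀ i ∈ I, 0 < i) : psums (A.sum :: I) ⊆ psums (A ++ B) ↔ psums I ⊆ psums B := by
  rw [psums_cons, psums_append]
  constructor
  · intro h x hx
    have hx_mem : A.sum + x ∈ psums A ∪ (psums B).image (A.sum + ·) :=
      h (mem_insert_of_mem (mem_image_of_mem _ hx))
    have hx_not_mem : A.sum + x ∉ psums A := fun hxA =>
      (le_sum_of_mem_psums hxA).not_gt (Nat.lt_add_of_pos_right (pos_of_mem_psums hI hx))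
    simpa [hx_not_mem] using hx_mem
  · intro h
    exact insert_subset (mem_union_left _ (sum_mem_psums hA))
      ((image_subset_image h).trans subset_union_right)

end PartialSums

section Refinement

variable {m n : ℕ}

/-- The compositions `J ⪰ I`, finer than `I`. Refinement is encoded by Mathlib's boundary sets,
which unlike `psums` contain `0`. -/
def refinements (I : Composition n) : Finset (Composition n) :=
  {J | I.boundaries ⊆ J.boundaries}

theorem mem_boundaries_iff (I : Composition n) (x : Fin (n + 1)) :
    x ∈ I.boundaries ↔ x = 0 ∨ (x : ℕ) ∈ psums I.blocks := by
  have hsucc : (∃ i : Fin I.length, I.boundary i.succ = x) ↔ (x : ℕ) ∈ psums I.blocks := by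
    simp [Composition.boundary, Composition.sizeUpTo, psums, Fin.exists_iff, Fin.ext_iff,
      -List.sum_take_succ]
  simp only [Composition.boundaries, mem_map, mem_univ, true_and, RelEmbedding.coe_toEmbedding,
    Fin.exists_fin_succ, Composition.boundary_zero, hsucc, @eq_comm _ 0 x]

theorem mem_refinements {I J : Composition n} :
    J ∈ refinements I ↔ psums I.blocks ⊆ psums J.blocks := by
  simp only [refinements, mem_filter, mem_univ, true_and]
  constructor
  · intro h x hx
    have hx_lt : x < n + 1 :=
      Nat.lt_succ_of_le ((le_sum_of_mem_psums hx).trans_eq I.blocks_sum)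
    have hx_ne : (⟨x, hx_lt⟩ : Fin (n + 1)) ≠ 0 :=
      Fin.ne_of_val_ne (pos_of_mem_psums (fun _ => I.blocks_pos) hx).ne'
    have hx_mem := h ((mem_boundaries_iff I ⟨x, hx_lt⟩).2 (.inr hx))
    exact ((mem_boundaries_iff J _).1 hx_mem).resolve_left hx_ne
  · intro h x hx
    exact (mem_boundaries_iff J x).2 (((mem_boundaries_iff I x).1 hx).imp_right (@h _))

theorem eq_of_blocks_prefix {A A' : Composition m} (h : A.blocks <+: A'.blocks) : A = A' := by
  obtain ⟨C, hC⟩ := h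
  have hsum : C.sum = 0 := by
    have := congrArg List.sum hC
    rw [List.sum_append, A.blocks_sum, A'.blocks_sum] at this
    omega
  have hC_nil : C = [] := List.eq_nil_iff_forall_not_mem.2 fun i hi =>
    (A'.blocks_pos (hC ▸ List.mem_append_right _ hi)).ne' (List.sum_eq_zero_iff.1 hsum i hi)
  exact Composition.ext (by simpa [hC_nil] using hC)

theorem append_eq_append_iff {A A' : Composition m} {B B' : Composition n} :
    A.append B = A'.append B' ↔ A = A' ∧ B = B' := by
  refine ⟨fun h => ?_, fun h => by rw [h.1, h.2]⟩
  have hblocks : A.blocks ++ B.blocks = A'.blocks ++ B'.blocks := congrArg Composition.blocks h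
  have hA : A.blocks <+: A.blocks ++ B.blocks := List.prefix_append _ _
  have hA' : A'.blocks <+: A.blocks ++ B.blocks := hblocks ▸ List.prefix_append _ _
  obtain rfl : A = A' := (List.prefix_or_prefix_of_prefix hA hA').elim eq_of_blocks_prefix
    fun hprefix => (eq_of_blocks_prefix hprefix).symm
  exact ⟨rfl, Composition.ext (List.append_cancel_left hblocks)⟩

theorem exists_append_eq {J : Composition (m + n)} (hm : m ∈ psums J.blocks) :
    ∃ (A : Composition m) (B : Composition n), A.append B = J := by
  obtain ⟨k, -, hk⟩ := mem_image.1 hm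
  have hsum : (J.blocks.take (k + 1)).sum + (J.blocks.drop (k + 1)).sum = m + n := by
    rw [List.sum_take_add_sum_drop, J.blocks_sum]
  exact ⟨⟨J.blocks.take (k + 1), fun hi => J.blocks_pos (List.mem_of_mem_take hi), hk⟩,
    ⟨J.blocks.drop (k + 1), fun hi => J.blocks_pos (List.mem_of_mem_drop hi), by omega⟩,
    Composition.ext (List.take_append_drop _ _)⟩

theorem append_mem_refinements_single_append (hm : 0 < m) {A : Composition m}
    {B I : Composition n} :
    A.append B ∈ refinements ((Composition.single m hm).append I) ↔ B ∈ refinements I := by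
  have hA : A.blocks ≠ [] := A.blocks_eq_nil.not.2 hm.ne'
  have h := psums_sum_cons_subset_psums_append_iff (B := B.blocks) hA fun _ => I.blocks_pos
  rw [A.blocks_sum] at h
  simpa [mem_refinements, Composition.append] using h

theorem sum_refinements_single_append {M : Type*} [AddCommMonoid M] (hm : 0 < m)
    (I : Composition n) (F : Composition (m + n) → M) :
    ∑ J ∈ refinements ((Composition.single m hm).append I), F J =
      ∑ A : Composition m, ∑ B ∈ refinements I, F (A.append B) := by
  rw [← sum_product']
  symm
  refine sum_nbij (fun p => p.1.append p.2) ?_ ?_ ?_ fun _ _ => rfl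
  · intro p hp
    exact (append_mem_refinements_single_append hm).2 (mem_product.1 hp).2
  · intro p _ q _ hpq
    exact Prod.ext_iff.2 (append_eq_append_iff.1 hpq)
  · intro J hJ
    have hm_mem : m ∈ psums J.blocks :=
      mem_refinements.1 hJ (by simp [Composition.append, psums_cons])
    obtain ⟨A, B, rfl⟩ := exists_append_eq hm_mem
    exact ⟨(A, B), by simpa using (append_mem_refinements_single_append hm).1 hJ, rfl⟩

theorem prod_map_sum_eq_sum_refinements {R : Type*} [Semiring R] (F : ∀ n, Composition n → R)
    (hF_zero : F 0 (Composition.ones 0) = 1)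
    (hF_append : ∀ {m n : ℕ} (A : Composition m) (B : Composition n),
      F (m + n) (A.append B) = F m A * F n B)
    (I : Composition n) :
    (I.blocks.map fun i => ∑ J : Composition i, F i J).prod = ∑ J ∈ refinements I, F n J := by
  induction I using Composition.recOnSingleAppend with
  | zero =>
    have hrefinements : refinements (Composition.ones 0) = {Composition.ones 0} := by decide
    simp [hrefinements, hF_zero]
  | single_append k n I ih =>
    simp only [sum_refinements_single_append, hF_append, ← sum_mul_sum, ← ih]
    simp [Composition.append]

end Refinement

section MoebiusInversion

theorem sum_Icc_neg_one_pow_card {α R : Type*} [DecidableEq α] [Ring R] (s t : Finset α) :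
    ∑ u ∈ Icc s t, (-1 : R) ^ #u = if s = t then (-1) ^ #t else 0 := by
  split_ifs with hst
  · simp [hst]
  by_cases hsub : s ⊆ t
  · have hne : (t \ s).Nonempty :=
      sdiff_nonempty.2 fun hts => hst (hsub.antisymm hts)
    have hdisj : ∀ u ∈ (t \ s).powerset, Disjoint s u := fun u hu =>
      disjoint_sdiff.mono_right (mem_powerset.1 hu)
    calc ∑ u ∈ Icc s t, (-1 : R) ^ #u
        = ∑ v ∈ (t \ s).powerset, (-1 : R) ^ #(s ∪ v) := by
          rw [Icc_eq_image_powerset hsub, sum_image]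
          intro u hu v hv huv
          rw [← union_sdiff_cancel_left (hdisj u hu), ← union_sdiff_cancel_left (hdisj v hv)]
          exact congrArg (· \ s) huv
      _ = (-1) ^ #s * ((∑ v ∈ (t \ s).powerset, (-1 : ℤ) ^ #v : ℤ) : R) := by
          push_cast
          rw [mul_sum]
          exact sum_congr rfl fun v hv => by rw [card_union_of_disjoint (hdisj v hv), pow_add]
      _ = 0 := by
          rw [sum_powerset_neg_one_pow_card_of_nonempty hne, Int.cast_zero, mul_zero]
  · rw [Icc_eq_empty hsub, sum_empty]

variable {n : ℕ}

theorem boundaries_injective : Function.Injective (Composition.boundaries (n := n)) :=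
  fun _ _ h => (compositionEquiv n).injective (CompositionAsSet.ext h)

theorem exists_boundaries_eq_of_subset {I : Composition n} {s : Finset (Fin (n + 1))}
    (hs : I.boundaries ⊆ s) : ∃ J : Composition n, J.boundaries = s :=
  let c : CompositionAsSet n :=
    ⟨s, hs I.toCompositionAsSet.zero_mem, hs I.toCompositionAsSet.getLast_mem⟩
  ⟨c.toComposition, c.toComposition_boundaries⟩

theorem neg_one_pow_sub_length {k : Type*} [Ring k] (J : Composition n) :
    (-1 : k) ^ (n - J.length) = (-1) ^ (n + 1) * (-1) ^ #J.boundaries := by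
  have hexp : n + 1 + #J.boundaries = n - J.length + 2 * (J.length + 1) := by
    rw [J.card_boundaries_eq_succ_length]
    have := J.length_le
    omega
  rw [← pow_add, hexp, pow_add, pow_mul, neg_one_sq, one_pow, mul_one]

theorem sum_neg_one_pow_sub_length_between {k : Type*} [Ring k] (I K : Composition n) :
    ∑ J ∈ refinements I with K ∈ refinements J, (-1 : k) ^ (n - J.length) =
      if I = K then (-1) ^ (n - K.length) else 0 := by
  have hboundaries :
      ∑ J ∈ refinements I with K ∈ refinements J, (-1 : k) ^ #J.boundaries =
        ∑ s ∈ Icc I.boundaries K.boundaries, (-1 : k) ^ #s := by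
    refine sum_nbij Composition.boundaries ?_ boundaries_injective.injOn ?_ fun _ _ => rfl
    · intro J hJ
      simpa [refinements] using hJ
    · intro s hs
      obtain ⟨hIs, hsK⟩ := mem_Icc.1 hs
      obtain ⟨J, rfl⟩ := exists_boundaries_eq_of_subset hIs
      exact ⟨J, by simpa [refinements] using And.intro hIs hsK, rfl⟩
  simp only [neg_one_pow_sub_length, ← mul_sum, hboundaries, sum_Icc_neg_one_pow_card,
    boundaries_injective.eq_iff, mul_ite, mul_zero]

theorem eq_signed_sum_refinements_of_forall_eq {k M : Type*} [Ring k]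
    [AddCommMonoid M] [Module k M] {a b : Composition n → M}
    (hb : ∀ I, b I = ∑ J ∈ refinements I, (-1 : k) ^ (n - J.length) • a J)
    (I : Composition n) : a I = ∑ J ∈ refinements I, (-1 : k) ^ (n - J.length) • b J := by
  symm
  calc ∑ J ∈ refinements I, (-1 : k) ^ (n - J.length) • b J
      = ∑ J ∈ refinements I, ∑ K ∈ refinements J,
          (-1 : k) ^ (n - J.length) • (-1 : k) ^ (n - K.length) • a K := by
        simp only [hb, smul_sum]
    _ = ∑ K, ∑ J ∈ refinements I with K ∈ refinements J,
          (-1 : k) ^ (n - J.length) • (-1 : k) ^ (n - K.length) • a K :=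
        sum_comm' (by simp)
    _ = ∑ K, (if I = K then (-1 : k) ^ (n - K.length) else 0) •
          (-1 : k) ^ (n - K.length) • a K := by
        simp only [← sum_smul, sum_neg_one_pow_sub_length_between]
    _ = a I := by
        simp [ite_smul, smul_smul, ← pow_add]

end MoebiusInversion

section SignedMonomials

variable (k : Type*) {R : Type*} [CommRing k] [Semiring R] [Algebra k R]

/-- The signed monomial `(−1)^{n−ℓ(J)} s_{j₁} ⋯ s_{j_r}` of a sequence `s`; the subtraction never
truncates, as `ℓ(J) ≤ n`. -/
def signedProd (s : ℕ → R) (n : ℕ) (J : Composition n) : R :=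
  (-1 : k) ^ (n - J.length) • (J.blocks.map s).prod

/-- The elementary sequence `Λ_n = ∑_{|J|=n} (−1)^{n−ℓ(J)} s^J` of an arbitrary sequence `s` in
a `k`-algebra; it is `Lam` for `k = ℚ` and `s = S`. -/
def elementary (s : ℕ → R) (n : ℕ) : R :=
  ∑ J : Composition n, signedProd k s n J

theorem signedProd_append (s : ℕ → R) {m n : ℕ} (A : Composition m) (B : Composition n) :
    signedProd k s (m + n) (A.append B) = signedProd k s m A * signedProd k s n B := by
  have hsub : m + n - (A.append B).length = (m - A.length) + (n - B.length) := by
    rw [show (A.append B).length = A.length + B.length from List.length_append,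
      tsub_add_tsub_comm A.length_le B.length_le]
  simp only [signedProd, hsub, pow_add, smul_mul_smul_comm]
  simp [Composition.append]

theorem prod_map_elementary (s : ℕ → R) {n : ℕ} (I : Composition n) :
    (I.blocks.map (elementary k s)).prod =
      ∑ J ∈ refinements I, (-1 : k) ^ (n - J.length) • (J.blocks.map s).prod :=
  prod_map_sum_eq_sum_refinements (signedProd k s) (by simp [signedProd])
    (signedProd_append k s) I

theorem lambda_S_transition_general (s : ℕ → R) (n : ℕ) (I : Composition n) :
    ((I.blocks.map (elementary k s)).prod =
      ∑ J : Composition n,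
        if psums I.blocks ⊆ psums J.blocks then
          (-1 : k) ^ (n - J.length) • (J.blocks.map s).prod
        else 0) ∧
    ((I.blocks.map s).prod =
      ∑ J : Composition n,
        if psums I.blocks ⊆ psums J.blocks then
          (-1 : k) ^ (n - J.length) • (J.blocks.map (elementary k s)).prod
        else 0) := by
  simp only [← mem_refinements, sum_ite_mem, univ_inter]
  exact ⟨prod_map_elementary k s I,
    eq_signed_sum_refinements_of_forall_eq (prod_map_elementary k s) I⟩

end SignedMonomials

/-- **Transition between the bases `S^I` and `Λ^I`**: for every composition `I` of `n`,
`Λ^I = ∑_{J ⪰ I} (−1)^{|I|−ℓ(J)} S^J` and `S^I = ∑_{J ⪰ I} (−1)^{|I|−ℓ(J)} Λ^J`,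
the sums being over the compositions `J` of `n` refining `I`
(every partial sum of `I` is a partial sum of `J`).  In particular the two transition
matrices coincide. -/
theorem lambda_S_transition (n : ℕ) (I : Composition n) :
    (LamProd I.blocks =
      ∑ J : Composition n,
        if psums I.blocks ⊆ psums J.blocks then
          ((-1 : ℚ) ^ (n - J.length)) • SProd J.blocks
        else 0) ∧
    (SProd I.blocks =
      ∑ J : Composition n,
        if psums I.blocks ⊆ psums J.blocks then
          ((-1 : ℚ) ^ (n - J.length)) • LamProd J.blocks
        else 0) :=
  lambda_S_transition_general ℚ S n I

end

end NCSF
end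

section
/- In Sym, for every n ≥ 1, Φ_n = Σ_{|I|=n} ((−1)^{ℓ(I)−1} / C(n−1, ℓ(I)−1)) R_I, where the sum is over all compositions I of n and C(a,b) denotes the binomial coefficient. -/
open Finset

namespace NCSF

noncomputable section

/-- The noncommutative power sums of the second kind
`Φ_n = ∑_{|J|=n} (−1)^{ℓ(J)−1} (n/ℓ(J)) S^J`. -/
def Phi (n : ℕ) : Sym :=
  ∑ J : Composition n,
    ((-1 : ℚ) ^ (J.length - 1) * (n : ℚ) / (J.length : ℚ)) • SProd J.blocks

/-!
Collecting the coefficient of `S^J` on the right-hand side, the signs combine to `(-1)^(ℓ(J) - 1)`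
and it remains to show that `∑_{I ⪰ J} 1 / C(n - 1, ℓ(I) - 1) = n / ℓ(J)`. Descent sets turn this
into a sum over the sets `A` with `B ⊆ A ⊆ {1, …, n - 1}` for a fixed `B` of size `ℓ(J) - 1`.
Grouping the sets `A` by their size, the identity `C(m, i) / C(m + b, b + i) =
C(b + i, b) / C(m + b, b)` reduces the sum to the hockey-stick identity.
-/

section Binomial

variable (K : Type*) [Field K] [CharZero K]

theorem choose_mul_inv_choose_add {m i : ℕ} (hi : i ≤ m) (b : ℕ) :
    (m.choose i : K) * ((m + b).choose (b + i) : K)⁻¹ =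
      ((b + i).choose b : K) * ((m + b).choose b : K)⁻¹ := by
  have hchoose : (m + b).choose (b + i) * (b + i).choose b = (m + b).choose b * m.choose i := by
    simpa using Nat.choose_mul (n := m + b) (Nat.le_add_right b i)
  have hbi : ((m + b).choose (b + i) : K) ≠ 0 :=
    Nat.cast_ne_zero.mpr (Nat.choose_ne_zero (by lia))
  have hb : ((m + b).choose b : K) ≠ 0 := Nat.cast_ne_zero.mpr (Nat.choose_ne_zero (by lia))
  rw [← div_eq_mul_inv, ← div_eq_mul_inv, div_eq_div_iff hbi hb]
  norm_cast
  rw [mul_comm, ← hchoose, mul_comm]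

theorem sum_range_choose_mul_inv_choose_add (m b : ℕ) :
    ∑ i ∈ range (m + 1), (m.choose i : K) * ((m + b).choose (b + i) : K)⁻¹ =
      ((m + b + 1 : ℕ) : K) / ((b + 1 : ℕ) : K) := by
  have hb : ((m + b).choose b : K) ≠ 0 := Nat.cast_ne_zero.mpr (Nat.choose_ne_zero (by lia))
  calc ∑ i ∈ range (m + 1), (m.choose i : K) * ((m + b).choose (b + i) : K)⁻¹
      = ∑ i ∈ range (m + 1), ((i + b).choose b : K) * ((m + b).choose b : K)⁻¹ :=
        sum_congr rfl fun i hi => by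
          rw [choose_mul_inv_choose_add K (mem_range_succ_iff.mp hi), add_comm b i]
    _ = ((m + b + 1).choose (b + 1) : K) / ((m + b).choose b : K) := by
        rw [← sum_mul, ← Nat.cast_sum, Nat.sum_range_add_choose, div_eq_mul_inv]
    _ = ((m + b + 1 : ℕ) : K) / ((b + 1 : ℕ) : K) := by
        rw [div_eq_div_iff hb (Nat.cast_ne_zero.mpr b.succ_ne_zero)]
        exact_mod_cast (Nat.add_one_mul_choose_eq (m + b) b).symm

end Binomial

section Interval

variable {α : Type*} [DecidableEq α] {s t : Finset α}

theorem sum_Icc_apply_card {M : Type*} [AddCommMonoid M] (f : ℕ → M) (hst : s ⊆ t) :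
    ∑ u ∈ Icc s t, f #u = ∑ i ∈ range (#(t \ s) + 1), (#(t \ s)).choose i • f (#s + i) := by
  have hdisj : ∀ u ∈ (t \ s).powerset, Disjoint s u := fun u hu =>
    disjoint_of_subset_right (mem_powerset.mp hu) disjoint_sdiff
  have hinj : Set.InjOn (s ∪ ·) ((t \ s).powerset : Set (Finset α)) := fun u hu v hv huv => by
    rw [← union_sdiff_cancel_left (hdisj u hu), ← union_sdiff_cancel_left (hdisj v hv)]
    exact congrArg (· \ s) huv
  rw [Icc_eq_image_powerset hst, sum_image hinj,
    ← sum_powerset_apply_card fun i => f (#s + i)]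
  exact sum_congr rfl fun u hu => by rw [card_union_of_disjoint (hdisj u hu)]

theorem sum_Icc_inv_choose_card (K : Type*) [Field K] [CharZero K] (hst : s ⊆ t) :
    ∑ u ∈ Icc s t, ((#t).choose #u : K)⁻¹ = ((#t + 1 : ℕ) : K) / ((#s + 1 : ℕ) : K) := by
  rw [sum_Icc_apply_card (fun i => ((#t).choose i : K)⁻¹) hst,
    ← card_sdiff_add_card_eq_card hst, ← sum_range_choose_mul_inv_choose_add]
  simp only [nsmul_eq_mul]

end Interval

section DescentSet

variable {n : ℕ}

/-- The descent set `{i₁, i₁ + i₂, …, i₁ + ⋯ + i_{r-1}} ⊆ {1, …, n - 1}` of a composition of `n`,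
with `k : Fin (n - 1)` standing for `k + 1`; a composition is determined by its descent set, and
coarsening becomes inclusion. -/
def descentSet (n : ℕ) : Composition n ≃ Finset (Fin (n - 1)) :=
  (compositionEquiv n).trans (compositionAsSetEquiv n)

theorem psums_blocks_eq_map_boundaries (c : Composition n) :
    psums c.blocks = (c.boundaries.erase 0).map Fin.valEmbedding := by
  have herase : c.boundaries.erase 0 = univ.map ((Fin.succEmb _).trans c.boundary.toEmbedding) := by
    rw [Composition.boundaries, Fin.univ_succ, map_cons, ← map_map]
    exact erase_cons ..
  ext x
  rw [herase, map_map]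
  simp only [psums, mem_image, mem_range, c.blocks_length, mem_map, mem_univ, true_and,
    Fin.exists_iff]
  exact exists_congr fun _ => exists_prop.symm

theorem card_psums_blocks (c : Composition n) : #(psums c.blocks) = c.length := by
  have hzero : 0 ∈ c.boundaries := c.toCompositionAsSet.zero_mem
  rw [psums_blocks_eq_map_boundaries, card_map, card_erase_of_mem hzero,
    c.card_boundaries_eq_succ_length, Nat.add_sub_cancel]

theorem val_mem_psums_blocks {c : Composition n} {x : Fin (n + 1)} :
    (x : ℕ) ∈ psums c.blocks ↔ x ≠ 0 ∧ x ∈ c.boundaries := by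
  rw [psums_blocks_eq_map_boundaries, ← Fin.valEmbedding_apply, mem_map', mem_erase]

theorem psums_blocks_subset_Icc (c : Composition n) : psums c.blocks ⊆ Icc 1 n := by
  rw [psums_blocks_eq_map_boundaries]
  intro x hx
  obtain ⟨y, hy, rfl⟩ := mem_map.mp hx
  have hy0 : (y : ℕ) ≠ 0 := Fin.val_ne_zero_iff.mpr (ne_of_mem_erase hy)
  exact mem_Icc.mpr ⟨Nat.one_le_iff_ne_zero.mpr hy0, y.is_le⟩

theorem self_mem_psums_blocks (hn : 1 ≤ n) (c : Composition n) : n ∈ psums c.blocks := by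
  have hlast : Fin.last n ≠ 0 := Fin.val_ne_zero_iff.mp (Nat.one_le_iff_ne_zero.mp hn)
  exact val_mem_psums_blocks.mpr ⟨hlast, c.toCompositionAsSet.getLast_mem⟩

theorem mem_descentSet {c : Composition n} {k : Fin (n - 1)} :
    k ∈ descentSet n c ↔ (k : ℕ) + 1 ∈ psums c.blocks := by
  let x : Fin (n + 1) := ⟨k + 1, by lia⟩
  have hx : x ≠ 0 := Fin.val_ne_zero_iff.mp k.val.succ_ne_zero
  have hmem : k ∈ descentSet n c ↔ x ∈ c.boundaries := by
    simp [x, descentSet, compositionEquiv, compositionAsSetEquiv, Composition.toCompositionAsSet,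
      add_comm]
  exact hmem.trans (val_mem_psums_blocks.trans (and_iff_right hx)).symm

theorem psums_blocks_eq_insert_map_descentSet (hn : 1 ≤ n) (c : Composition n) :
    psums c.blocks =
      insert n ((descentSet n c).map (Fin.valEmbedding.trans (addRightEmbedding 1))) := by
  ext x
  simp only [mem_insert, mem_map, mem_descentSet]
  constructor
  · intro hx
    have hx' := mem_Icc.mp (psums_blocks_subset_Icc c hx)
    refine or_iff_not_imp_left.mpr fun hxn => ⟨⟨x - 1, by lia⟩, ?_, Nat.sub_add_cancel hx'.1⟩
    rwa [Nat.sub_add_cancel hx'.1]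
  · rintro (rfl | ⟨k, hk, rfl⟩)
    · exact self_mem_psums_blocks hn c
    · exact hk

theorem notMem_map_descentSet (c : Composition n) :
    n ∉ (descentSet n c).map (Fin.valEmbedding.trans (addRightEmbedding 1)) := by
  simp only [mem_map, Function.Embedding.trans_apply, Fin.valEmbedding_apply,
    addRightEmbedding_apply]
  rintro ⟨k, -, hk⟩
  lia

theorem psums_blocks_subset_psums_blocks_iff (hn : 1 ≤ n) {c d : Composition n} :
    psums c.blocks ⊆ psums d.blocks ↔ descentSet n c ⊆ descentSet n d := by
  rw [psums_blocks_eq_insert_map_descentSet hn c, psums_blocks_eq_insert_map_descentSet hn d,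
    insert_subset_insert_iff (notMem_map_descentSet c), map_subset_map]

theorem length_eq_card_descentSet_add_one (hn : 1 ≤ n) (c : Composition n) :
    c.length = #(descentSet n c) + 1 := by
  rw [← card_psums_blocks, psums_blocks_eq_insert_map_descentSet hn,
    card_insert_of_notMem (notMem_map_descentSet c), card_map]

theorem sum_finer_inv_choose_length (K : Type*) [Field K] [CharZero K] (hn : 1 ≤ n)
    (J : Composition n) :
    ∑ I : Composition n with psums J.blocks ⊆ psums I.blocks,
      ((n - 1).choose (I.length - 1) : K)⁻¹ = (n : K) / (J.length : K) := by
  calc ∑ I : Composition n with psums J.blocks ⊆ psums I.blocks,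
        ((n - 1).choose (I.length - 1) : K)⁻¹
      = ∑ A ∈ Icc (descentSet n J) univ, ((n - 1).choose #A : K)⁻¹ :=
        sum_equiv (descentSet n) (by simp [psums_blocks_subset_psums_blocks_iff hn])
          fun I _ => by rw [length_eq_card_descentSet_add_one hn, Nat.add_sub_cancel]
    _ = (n : K) / (J.length : K) := by
        have h := sum_Icc_inv_choose_card K (subset_univ (descentSet n J))
        rwa [card_univ, Fintype.card_fin, Nat.sub_add_cancel hn,
          ← length_eq_card_descentSet_add_one hn] at h

end DescentSet

section Ribbon

variable {n : ℕ}

theorem Ribbon_blocks_eq_sum (I : Composition n) :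
    Ribbon I.blocks = ∑ J : Composition n with psums J.blocks ⊆ psums I.blocks,
      (-1 : ℚ) ^ (I.length - J.length) • SProd J.blocks := by
  obtain ⟨L, _, rfl⟩ := I
  exact (sum_filter ..).symm

theorem sum_smul_Ribbon_blocks (f : Composition n → ℚ) :
    ∑ I : Composition n, f I • Ribbon I.blocks =
      ∑ J : Composition n, (∑ I : Composition n with psums J.blocks ⊆ psums I.blocks,
        f I * (-1) ^ (I.length - J.length)) • SProd J.blocks := by
  simp only [Ribbon_blocks_eq_sum, smul_sum, sum_smul, smul_smul]
  exact sum_comm' (by simp)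

end Ribbon

/-- **Expansion of `Φ_n` in the ribbon basis**: for every `n ≥ 1`,
`Φ_n = ∑_{|I|=n} ((−1)^{ℓ(I)−1} / C(n−1, ℓ(I)−1)) R_I`. -/
theorem phi_in_ribbon_basis :
    ∀ n : ℕ, 1 ≤ n →
      Phi n = ∑ I : Composition n,
        ((-1 : ℚ) ^ (I.length - 1) / (Nat.choose (n - 1) (I.length - 1) : ℚ)) •
          Ribbon I.blocks := by
  intro n hn
  rw [Phi, sum_smul_Ribbon_blocks]
  refine sum_congr rfl fun J _ => congrArg (· • SProd J.blocks) ?_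
  rw [mul_div_assoc, ← sum_finer_inv_choose_length ℚ hn J, mul_sum]
  refine sum_congr rfl fun I hI => ?_
  have hsign : (-1 : ℚ) ^ (I.length - 1) * (-1) ^ (I.length - J.length) =
      (-1) ^ (J.length - 1) := by
    have hJ : 0 < J.length := J.length_pos_iff.mpr hn
    have hJI : J.length ≤ I.length := by
      simpa only [card_psums_blocks] using card_le_card (mem_filter.mp hI).2
    rw [← pow_add]
    exact neg_one_pow_congr (by grind)
  rw [← hsign]
  ring

end

end NCSF
end
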